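/- arXiv:1907.08084 — 2 statements merged into one kernel-verified Lean document; each statement's English description precedes it below -/
import Mathlib

section
/- For every even positive integer n, the 4-graph H(n) is F_4(6,3)-free; that is, there do not exist three distinct edges of H(n) whose union contains at most 6 vertices. -/
/-!
Two distinct edges share at most two vertices, because the fourth vertex of an edge is determined
by the other three (`card_inter_le_two`). If three edges `A`, `B`, `C` span at most six vertices,
then `A ∪ B` is already the whole span, and inclusion–exclusion for `C ∩ A` and `C ∩ B` shows that
`C` misses `A ∩ B`; hence `C` is exactly the symmetric difference of `A` and `B`. With `s` the
sum of the elements of `A ∩ B`, adding up the elements of `A` and `B` gives `1 + 1 = 1 + 2 * s`,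
so `2 * s = 1`, which is impossible modulo an even number.
-/

/-- An `r`-graph (set of edges) is `F_r(v,e)`-free if there do not exist `e` distinct
edges whose union contains at most `v` vertices. -/
def FrFree {V : Type*} [DecidableEq V] (H : Finset (Finset V)) (v e : ℕ) : Prop :=
  ¬ ∃ S ⊆ H, S.card = e ∧ (S.biUnion id).card ≤ v

/-- `H(n)`: the 4-graph on `ℤ/nℤ` whose edges are the 4-element subsets with
element-sum equal to `1`. -/
def Hgraph (n : ℕ) [NeZero n] : Finset (Finset (ZMod n)) :=
  Finset.univ.filter (fun A => A.card = 4 ∧ A.sum id = 1)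

/-- If two edges shared three vertices, equality of their sums would force the remaining
vertices to agree as well. -/
theorem card_inter_le_two {G : Type*} [AddCommGroup G] [DecidableEq G] {A B : Finset G}
    (hA : A.card = 4) (hB : B.card = 4) (hsum : A.sum id = B.sum id) (hne : A ≠ B) :
    (A ∩ B).card ≤ 2 := by
  by_contra! h
  have hcA := Finset.card_sdiff_add_card_inter A B
  have hcB := Finset.card_sdiff_add_card_inter B A
  rw [Finset.inter_comm] at hcB
  have hpos : (A \ B).card ≠ 0 := by
    intro h0
    rw [Finset.card_eq_zero, Finset.sdiff_eq_empty_iff_subset] at h0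
    exact hne (Finset.eq_of_subset_of_card_le h0 (by omega))
  obtain ⟨a, ha⟩ := Finset.card_eq_one.mp (show (A \ B).card = 1 by omega)
  obtain ⟨b, hb⟩ := Finset.card_eq_one.mp (show (B \ A).card = 1 by omega)
  have hsA := Finset.sum_inter_add_sum_sdiff A B id
  have hsB := Finset.sum_inter_add_sum_sdiff B A id
  rw [Finset.inter_comm B A, ← hsum, ← hsA, ha, hb] at hsB
  have hab : b = a := by simpa using hsB
  have haA : a ∈ A \ B := by simp [ha]
  have hbB : b ∈ B \ A := by simp [hb]
  rw [hab] at hbB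
  exact (Finset.mem_sdiff.mp haA).2 (Finset.mem_sdiff.mp hbB).1

theorem two_mul_ne_one_of_even {n : ℕ} (heven : Even n) (s : ZMod n) : 2 * s ≠ 1 := by
  intro h
  have h2 := congrArg (ZMod.castHom heven.two_dvd (ZMod 2)) h
  rw [map_mul, map_ofNat, map_one] at h2
  generalize ZMod.castHom heven.two_dvd (ZMod 2) s = t at h2
  revert t
  decide

/-- For every even positive integer `n`, the 4-graph `H(n)` is `F₄(6,3)`-free: there do
not exist three distinct edges of `H(n)` whose union contains at most 6 vertices. -/
theorem stmt_3 (n : ℕ) [NeZero n] (heven : Even n) :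
    FrFree (Hgraph n) 6 3 := by
  rintro ⟨S, hS, hcard, hunion⟩
  obtain ⟨A, B, C, hAB, hAC, hBC, rfl⟩ := Finset.card_eq_three.mp hcard
  have hedge : ∀ E ∈ ({A, B, C} : Finset (Finset (ZMod n))), E.card = 4 ∧ E.sum id = 1 :=
    fun E hE => (Finset.mem_filter.mp (hS hE)).2
  obtain ⟨hA, hsA⟩ := hedge A (by simp)
  obtain ⟨hB, hsB⟩ := hedge B (by simp)
  obtain ⟨hC, hsC⟩ := hedge C (by simp)
  have iAB := card_inter_le_two hA hB (hsA.trans hsB.symm) hAB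
  have iCA := card_inter_le_two hC hA (hsC.trans hsA.symm) hAC.symm
  have iCB := card_inter_le_two hC hB (hsC.trans hsB.symm) hBC.symm
  have hspan : ({A, B, C} : Finset (Finset (ZMod n))).biUnion id = (A ∪ B) ∪ C := by
    simp [Finset.biUnion_insert, Finset.union_assoc]
  rw [hspan] at hunion
  have hcAB := Finset.card_union_add_card_inter A B
  have hle := Finset.card_le_card (Finset.subset_union_left : A ∪ B ⊆ (A ∪ B) ∪ C)
  have heq : A ∪ B = (A ∪ B) ∪ C :=
    Finset.eq_of_subset_of_card_le Finset.subset_union_left (by omega)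
  have hCsub : C ⊆ A ∪ B := heq ▸ Finset.subset_union_right
  -- Inclusion–exclusion inside `C`: two parts of size at most 2 cover its 4 elements.
  have hie := Finset.card_union_add_card_inter (C ∩ A) (C ∩ B)
  rw [← Finset.inter_union_distrib_left, Finset.inter_eq_left.mpr hCsub,
    ← Finset.inter_inter_distrib_left] at hie
  have hdisj : Disjoint C (A ∩ B) := by
    rw [Finset.disjoint_iff_inter_eq_empty, ← Finset.card_eq_zero]
    omega
  have hsub : A ∩ B ⊆ A ∪ B := Finset.inter_subset_left.trans Finset.subset_union_left
  have hcd := Finset.card_sdiff_add_card_eq_card hsub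
  have hCeq : C = (A ∪ B) \ (A ∩ B) :=
    Finset.eq_of_subset_of_card_le (Finset.subset_sdiff.mpr ⟨hCsub, hdisj⟩) (by omega)
  have h1 := Finset.sum_union_inter (s₁ := A) (s₂ := B) (f := id)
  have h2 := Finset.sum_sdiff (f := id) hsub
  rw [← hCeq, hsC] at h2
  rw [hsA, hsB, ← h2] at h1
  exact two_mul_ne_one_of_even heven ((A ∩ B).sum id) (by linear_combination h1)
end

section
/- For every integer r > 4 there exists a constant C > 0 such that for every sufficiently large positive integer n there exists an r-graph on at most n vertices which is F_r(r+1,2)-free and F_r(r+2,3)-free and has at least (1/r − C/√n)·C(n,r−1) edges. -/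
open Finset

section Construction

/-! ### The construction -/

variable {V A B : Type*} [Fintype V] [DecidableEq V] [AddCommGroup A] [AddCommGroup B]
  [DecidableEq A] [DecidableEq B]

/-- The `r`-sets of vertices whose labels in `A × B` sum to zero and which contain no four vertices
whose `B`-labels sum to zero. -/
def zeroSumEdges (e : V ≃ A × B) (r : ℕ) : Finset (Finset V) :=
  (powersetCard r univ).filter fun T =>
    ∑ x ∈ T, e x = 0 ∧ ∀ Q ∈ powersetCard 4 T, ∑ x ∈ Q, (e x).2 ≠ 0

lemma mem_zeroSumEdges {e : V ≃ A × B} {r : ℕ} {T : Finset V} :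
    T ∈ zeroSumEdges e r ↔ T.card = r ∧ ∑ x ∈ T, e x = 0 ∧
      ∀ Q ⊆ T, Q.card = 4 → ∑ x ∈ Q, (e x).2 ≠ 0 := by
  simp [zeroSumEdges, mem_powersetCard]

lemma two_edges {e : V ≃ A × B} {r : ℕ} {S T : Finset V} (hS : S ∈ zeroSumEdges e r)
    (hT : T ∈ zeroSumEdges e r) (hne : S ≠ T) : r + 2 ≤ (S ∪ T).card := by
  obtain ⟨hSc, hS0, -⟩ := mem_zeroSumEdges.1 hS
  obtain ⟨hTc, hT0, -⟩ := mem_zeroSumEdges.1 hT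
  by_contra! hlt
  have h1 := card_sdiff_add_card S T
  have h2 := card_sdiff_add_card T S
  rw [union_comm] at h2
  have hpos : 0 < (S \ T).card := by
    rw [card_pos, sdiff_nonempty]
    intro hsub
    exact hne (eq_of_subset_of_card_le hsub (by omega))
  obtain ⟨x, hx⟩ := card_eq_one.1 (show (S \ T).card = 1 by omega)
  obtain ⟨y, hy⟩ := card_eq_one.1 (show (T \ S).card = 1 by omega)
  have h3 := sum_inter_add_sum_sdiff S T (fun v => e v)
  have h4 := sum_inter_add_sum_sdiff T S (fun v => e v)
  rw [inter_comm] at h4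
  rw [hx, sum_singleton, hS0] at h3
  rw [hy, sum_singleton, hT0, ← h3] at h4
  have hxy : y = x := e.injective (add_left_cancel h4)
  have hxm : x ∈ S \ T := by simp [hx]
  have hym : y ∈ T \ S := by simp [hy]
  rw [hxy] at hym
  exact (mem_sdiff.1 hym).2 (mem_sdiff.1 hxm).1

lemma three_edges (hB : ∀ b : B, b + b = 0) {e : V ≃ A × B} {r : ℕ} {S T U : Finset V}
    (hS : S ∈ zeroSumEdges e r) (hT : T ∈ zeroSumEdges e r) (hU : U ∈ zeroSumEdges e r)
    (hST : S ≠ T) (hSU : S ≠ U) (hTU : T ≠ U) : r + 2 < (S ∪ T ∪ U).card := by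
  by_contra! hle
  set W := S ∪ T ∪ U with hW
  have hSW : S ⊆ W := fun x hx => by simp [hW, hx]
  have hTW : T ⊆ W := fun x hx => by simp [hW, hx]
  have hUW : U ⊆ W := fun x hx => by simp [hW, hx]
  have eST := eq_of_subset_of_card_le (union_subset hSW hTW) (hle.trans (two_edges hS hT hST))
  have eSU := eq_of_subset_of_card_le (union_subset hSW hUW) (hle.trans (two_edges hS hU hSU))
  have eTU := eq_of_subset_of_card_le (union_subset hTW hUW) (hle.trans (two_edges hT hU hTU))
  obtain ⟨hSc, hS0, -⟩ := mem_zeroSumEdges.1 hS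
  obtain ⟨hTc, hT0, -⟩ := mem_zeroSumEdges.1 hT
  obtain ⟨-, -, hU4⟩ := mem_zeroSumEdges.1 hU
  have hWc : W.card = r + 2 := le_antisymm hle (eST ▸ two_edges hS hT hST)
  have hdisj : Disjoint (W \ S) (W \ T) := by
    rw [disjoint_left]
    intro x hx hx'
    rw [← eST] at hx
    simp only [mem_sdiff, mem_union] at hx hx'
    tauto
  have hsub : (W \ S) ∪ (W \ T) ⊆ U := by
    intro x hx
    rcases mem_union.1 hx with hx | hx
    · rw [← eSU] at hx
      simp only [mem_sdiff, mem_union] at hx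
      tauto
    · rw [← eTU] at hx
      simp only [mem_sdiff, mem_union] at hx
      tauto
  refine hU4 _ hsub ?_ ?_
  · rw [card_union_of_disjoint hdisj, card_sdiff_of_subset hSW, card_sdiff_of_subset hTW]
    omega
  · rw [sum_union hdisj]
    have h1 := sum_sdiff (f := fun v => e v) hSW
    have h2 := sum_sdiff (f := fun v => e v) hTW
    rw [hS0, add_zero] at h1
    rw [hT0, add_zero, ← h1] at h2
    have h3 := congrArg Prod.snd h2
    rw [Prod.snd_sum, Prod.snd_sum] at h3
    rw [h3]
    exact hB _

lemma zeroSumEdges_free_two (e : V ≃ A × B) (r : ℕ) : FrFree (zeroSumEdges e r) (r + 1) 2 := by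
  rintro ⟨F, hF, hc, hle⟩
  obtain ⟨S, T, hne, rfl⟩ := card_eq_two.1 hc
  have := two_edges (hF (by simp)) (hF (by simp)) hne
  simp only [biUnion_insert, singleton_biUnion, id] at hle
  omega

lemma zeroSumEdges_free_three (hB : ∀ b : B, b + b = 0) (e : V ≃ A × B) (r : ℕ) :
    FrFree (zeroSumEdges e r) (r + 2) 3 := by
  rintro ⟨F, hF, hc, hle⟩
  obtain ⟨S, T, U, h1, h2, h3, rfl⟩ := card_eq_three.1 hc
  have := three_edges hB (hF (by simp)) (hF (by simp)) (hF (by simp)) h1 h2 h3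
  simp only [biUnion_insert, singleton_biUnion, id, ← union_assoc] at hle
  omega

/-! ### Counting tuples -/

/-- The ordered `r`-tuples of vertices whose labels sum to zero. -/
def zeroSumTuples (e : V ≃ A × B) (r : ℕ) : Finset (Fin r → V) :=
  univ.filter fun x => ∑ i, e (x i) = 0

lemma card_zeroSumTuples (e : V ≃ A × B) (r : ℕ) :
    Fintype.card V ^ r ≤ (zeroSumTuples e (r + 1)).card := by
  have : (univ : Finset (Fin r → V)).card = Fintype.card V ^ r := by simp
  rw [← this]
  refine card_le_card_of_injOn
    (fun y => (Fin.cons (e.symm (-∑ i, e (y i))) y : Fin (r + 1) → V)) ?_ ?_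
  · intro y _
    simp [zeroSumTuples, Fin.sum_univ_succ]
  · intro y _ z _ h
    exact (Fin.cons_injective2 h).2

/-- A zero-sum tuple is determined by all its entries but one. -/
lemma eq_of_eq_off {e : V ≃ A × B} {r : ℕ} {x y : Fin r → V} (hx : x ∈ zeroSumTuples e r)
    (hy : y ∈ zeroSumTuples e r) (l : Fin r) (h : ∀ k, k ≠ l → x k = y k) : x = y := by
  simp only [zeroSumTuples, mem_filter, mem_univ, true_and] at hx hy
  rw [← add_sum_erase _ _ (mem_univ l)] at hx hy
  rw [sum_congr rfl (g := fun k => e (y k)) (fun k hk => by rw [h k (ne_of_mem_erase hk)]),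
    ← hy] at hx
  funext k
  by_cases hk : k = l
  · subst hk
    exact e.injective (add_right_cancel hx)
  · exact h k hk

lemma card_off_two {r : ℕ} {i l : Fin r} (h : i ≠ l) :
    Fintype.card {k : Fin r // k ≠ i ∧ k ≠ l} = r - 2 := by
  rw [Fintype.card_subtype]
  have : (univ.filter fun k : Fin r => k ≠ i ∧ k ≠ l) = univ \ {i, l} := by
    ext k
    simp
  rw [this, card_sdiff_of_subset (subset_univ _), card_pair h]
  simp

lemma card_repeated (e : V ≃ A × B) {r : ℕ} (hr : 4 < r) (i j : Fin r) (hij : i ≠ j) :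
    ((zeroSumTuples e r).filter fun x => x i = x j).card ≤ Fintype.card V ^ (r - 2) := by
  obtain ⟨l, hl⟩ : ∃ l : Fin r, l ∉ ({i, j} : Finset (Fin r)) := by
    by_contra! hall
    have := card_le_card (fun k _ => hall k : (univ : Finset (Fin r)) ⊆ {i, j})
    rw [card_pair hij] at this
    simp at this
    omega
  simp only [mem_insert, mem_singleton, not_or] at hl
  have : (univ : Finset ({k : Fin r // k ≠ i ∧ k ≠ l} → V)).card = Fintype.card V ^ (r - 2) := by
    rw [card_univ, Fintype.card_fun, card_off_two (Ne.symm hl.1)]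
  rw [← this]
  refine card_le_card_of_injOn (fun x k => x k.1) (fun _ _ => mem_coe.2 (mem_univ _)) ?_
  intro x hx y hy hxy
  simp only [coe_filter, Set.mem_ofPred_eq] at hx hy
  have hoff : ∀ k, k ≠ i → k ≠ l → x k = y k := fun k h1 h2 => congrFun hxy ⟨k, h1, h2⟩
  refine eq_of_eq_off hx.1 hy.1 l fun k hk => ?_
  by_cases hki : k = i
  · rw [hki, hx.2, hy.2]
    exact hoff j hij.symm (Ne.symm hl.2)
  · exact hoff k hki hk

/-- With `i ∈ Q` and `l ∉ Q`, a zero-sum tuple with zero `B`-sum over `Q` is determined by its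
entries off `i` and `l` and the `A`-label of entry `i`. -/
lemma card_four [Fintype A] (e : V ≃ A × B) {r : ℕ} (hr : 4 < r) (Q : Finset (Fin r))
    (hQ : Q.card = 4) :
    ((zeroSumTuples e r).filter fun x => ∑ k ∈ Q, (e (x k)).2 = 0).card ≤
      Fintype.card V ^ (r - 2) * Fintype.card A := by
  obtain ⟨i, hi⟩ : Q.Nonempty := card_pos.1 (by omega)
  obtain ⟨l, hl⟩ : ∃ l : Fin r, l ∉ Q := by
    by_contra! hall
    have := card_le_card (fun k _ => hall k : (univ : Finset (Fin r)) ⊆ Q)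
    simp at this
    omega
  have hil : i ≠ l := fun h => hl (h ▸ hi)
  have : (univ : Finset (({k : Fin r // k ≠ i ∧ k ≠ l} → V) × A)).card =
      Fintype.card V ^ (r - 2) * Fintype.card A := by
    rw [card_univ, Fintype.card_prod, Fintype.card_fun, card_off_two hil]
  rw [← this]
  refine card_le_card_of_injOn (fun x => (fun k => x k.1, (e (x i)).1))
    (fun _ _ => mem_coe.2 (mem_univ _)) ?_
  intro x hx y hy hxy
  simp only [coe_filter, Set.mem_ofPred_eq] at hx hy
  obtain ⟨hxy1, hxy2⟩ := Prod.mk.inj hxy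
  have hoff : ∀ k, k ≠ i → k ≠ l → x k = y k := fun k h1 h2 => congrFun hxy1 ⟨k, h1, h2⟩
  refine eq_of_eq_off hx.1 hy.1 l fun k hk => ?_
  by_cases hki : k = i
  · subst hki
    have h1 := hx.2
    have h2 := hy.2
    rw [← add_sum_erase _ _ hi] at h1 h2
    rw [sum_congr rfl (g := fun k => (e (y k)).2) (fun k' hk' => by
      rw [hoff k' (ne_of_mem_erase hk') (fun h => hl (h ▸ mem_of_mem_erase hk'))]), ← h2] at h1
    exact e.injective (Prod.ext hxy2 (add_right_cancel h1))
  · exact hoff k hki hk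

/-- The zero-sum tuples that list the vertices of an edge: the entries are distinct and no four
of them have zero `B`-sum. -/
def goodTuples (e : V ≃ A × B) (r : ℕ) : Finset (Fin r → V) :=
  (zeroSumTuples e r).filter fun x =>
    (∀ i j, x i = x j → i = j) ∧ ∀ Q ∈ powersetCard 4 univ, ∑ k ∈ Q, (e (x k)).2 ≠ 0

lemma card_goodTuples_le (e : V ≃ A × B) (r : ℕ) :
    (goodTuples e r).card ≤ r.factorial * (zeroSumEdges e r).card := by
  refine card_le_mul_card_image_of_maps_to (f := fun x => univ.image x) ?_ _ ?_
  · intro x hx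
    simp only [goodTuples, zeroSumTuples, mem_filter, mem_univ, true_and, mem_powersetCard,
      subset_univ] at hx
    obtain ⟨h0, hinj, h4⟩ := hx
    have hinj' : Function.Injective x := fun i j h => hinj i j h
    refine mem_zeroSumEdges.2 ⟨?_, ?_, ?_⟩
    · rw [card_image_of_injective _ hinj']
      simp
    · rw [sum_image fun i _ j _ h => hinj i j h]
      exact h0
    · intro Q hQ hQc
      obtain ⟨P, -, rfl⟩ := subset_image_iff.1 hQ
      rw [card_image_of_injective _ hinj'] at hQc
      rw [sum_image fun i _ j _ h => hinj i j h]
      exact h4 P hQc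
  · intro T hT
    have hTc := (mem_zeroSumEdges.1 hT).1
    have hcard : Fintype.card (Fin r ↪ T) = r.factorial := by
      rw [Fintype.card_embedding_eq, Fintype.card_coe, Fintype.card_fin, hTc,
        Nat.descFactorial_self]
    rw [← hcard, ← card_univ, ← card_map ⟨fun (f : Fin r ↪ T) k => (f k : V), fun f g h => by
      ext k
      exact congrFun h k⟩]
    refine card_le_card fun x hx => ?_
    simp only [goodTuples, mem_filter] at hx
    obtain ⟨⟨-, hinj, -⟩, rfl⟩ := hx
    refine mem_map.2 ⟨⟨fun k => ⟨x k, mem_image_of_mem _ (mem_univ k)⟩, fun i j h => ?_⟩,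
      mem_univ _, rfl⟩
    exact hinj i j (congrArg Subtype.val h)

lemma count_edges [Fintype A] (e : V ≃ A × B) {r : ℕ} (hr : 4 < r) :
    Fintype.card V ^ (r - 1) ≤ r.factorial * (zeroSumEdges e r).card +
      r ^ 2 * Fintype.card V ^ (r - 2) +
      r.choose 4 * (Fintype.card V ^ (r - 2) * Fintype.card A) := by
  have htot : Fintype.card V ^ (r - 1) ≤ (zeroSumTuples e r).card := by
    have := card_zeroSumTuples e (r - 1)
    rwa [Nat.sub_add_cancel (by omega)] at this
  set R := (univ : Finset (Fin r)).offDiag.biUnion fun p =>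
    (zeroSumTuples e r).filter fun x => x p.1 = x p.2 with hR
  set F := (powersetCard 4 (univ : Finset (Fin r))).biUnion fun Q =>
    (zeroSumTuples e r).filter fun x => ∑ k ∈ Q, (e (x k)).2 = 0 with hF
  have hcover : zeroSumTuples e r ⊆ goodTuples e r ∪ R ∪ F := by
    intro x hx
    by_contra hnot
    simp only [mem_union, not_or] at hnot
    obtain ⟨⟨hg, hr'⟩, hf⟩ := hnot
    refine hg (mem_filter.2 ⟨hx, fun i j hij => ?_, fun Q hQ h0 => ?_⟩)
    · by_contra hne
      exact hr' (mem_biUnion.2 ⟨(i, j), by simp [hne], mem_filter.2 ⟨hx, hij⟩⟩)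
    · exact hf (mem_biUnion.2 ⟨Q, hQ, mem_filter.2 ⟨hx, h0⟩⟩)
  have hRc : R.card ≤ r ^ 2 * Fintype.card V ^ (r - 2) := by
    refine (card_biUnion_le_card_mul _ _ _ fun p hp =>
      card_repeated e hr p.1 p.2 (mem_offDiag.1 hp).2.2).trans ?_
    refine Nat.mul_le_mul_right _ ?_
    rw [offDiag_card, card_univ, Fintype.card_fin, sq]
    exact Nat.sub_le _ _
  have hFc : F.card ≤ r.choose 4 * (Fintype.card V ^ (r - 2) * Fintype.card A) := by
    refine (card_biUnion_le_card_mul _ _ _ fun Q hQ =>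
      card_four e hr Q (mem_powersetCard.1 hQ).2).trans ?_
    rw [card_powersetCard, card_univ, Fintype.card_fin]
  have h1 := card_le_card hcover
  have h2 := card_union_le (goodTuples e r ∪ R) F
  have h3 := card_union_le (goodTuples e r) R
  have h4 := card_goodTuples_le e r
  omega

end Construction

/-! ### Choice of parameters -/

/-- The asymptotic estimate: `s` stands for `√n`, `N` for the number of vertices, `a` for the
order of `A`, `h` for the number of edges, and `c` for the number of four-sets of positions. -/
lemma edge_bound {r : ℕ} (hr : 4 < r) {n N a h c : ℕ} {s : ℝ} (hs : 1 ≤ s) (hsn : s ^ 2 = n)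
    (hN : N ≤ n) (hN' : (n : ℝ) - s ≤ N) (ha : (a : ℝ) ≤ 2 * s)
    (hcount : N ^ (r - 1) ≤ r.factorial * h + r ^ 2 * N ^ (r - 2) + c * (N ^ (r - 2) * a)) :
    ((1 / r : ℝ) - ((r + r ^ 2 + 2 * c : ℝ) / r) / s) * (n.choose (r - 1)) ≤ h := by
  have hs0 : 0 < s := by linarith
  have hr0 : (0 : ℝ) < r := by exact_mod_cast (by omega : 0 < r)
  have hn0 : (0 : ℝ) < n := by rw [← hsn]; positivity
  obtain ⟨t, rfl⟩ : ∃ t, r = t + 2 := ⟨r - 2, by omega⟩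
  simp only [Nat.add_sub_cancel, show t + 2 - 1 = t + 1 by omega] at hcount ⊢
  set D : ℝ := ((t + 2 : ℕ) : ℝ) + ((t + 2 : ℕ) : ℝ) ^ 2 + 2 * c with hD
  have hcount' : (N : ℝ) ^ (t + 1) ≤ (t + 2).factorial * h +
      ((t + 2 : ℕ) : ℝ) ^ 2 * (N : ℝ) ^ t + c * ((N : ℝ) ^ t * a) := by exact_mod_cast hcount
  have hNn : (N : ℝ) ^ t ≤ (n : ℝ) ^ t := by gcongr
  -- Bernoulli's inequality for `N ≥ n (1 - 1 / s)`.
  have hbern : (n : ℝ) ^ (t + 1) * (1 - (t + 1) / s) ≤ (N : ℝ) ^ (t + 1) := by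
    have h1s : 1 / s ≤ 1 := by rw [div_le_one hs0]; exact hs
    have hb := one_add_mul_le_pow (a := -(1 / s)) (by linarith) (t + 1)
    have hfac : (n : ℝ) - s = n * (1 + -(1 / s)) := by
      rw [← hsn]; field_simp; ring
    calc (n : ℝ) ^ (t + 1) * (1 - (t + 1) / s)
        = (n : ℝ) ^ (t + 1) * (1 + ((t + 1 : ℕ) : ℝ) * -(1 / s)) := by push_cast; ring
      _ ≤ (n : ℝ) ^ (t + 1) * (1 + -(1 / s)) ^ (t + 1) := by gcongr
      _ = ((n : ℝ) - s) ^ (t + 1) := by rw [hfac, mul_pow]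
      _ ≤ (N : ℝ) ^ (t + 1) := by
          refine pow_le_pow_left₀ ?_ hN' _
          rw [hfac]
          exact mul_nonneg hn0.le (by linarith)
  have hnt : (n : ℝ) ^ t * s = (n : ℝ) ^ (t + 1) / s := by
    rw [eq_div_iff hs0.ne', pow_succ, mul_assoc, ← sq, hsn]
  have e1 : ((t + 2 : ℕ) : ℝ) ^ 2 * (N : ℝ) ^ t ≤
      ((t + 2 : ℕ) : ℝ) ^ 2 * ((n : ℝ) ^ (t + 1) / s) := by
    rw [← hnt]
    gcongr
    nlinarith [pow_nonneg hn0.le t]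
  have e2 : c * ((N : ℝ) ^ t * a) ≤ 2 * c * ((n : ℝ) ^ (t + 1) / s) := by
    rw [← hnt]
    calc c * ((N : ℝ) ^ t * a) ≤ c * ((n : ℝ) ^ t * (2 * s)) := by gcongr
      _ = _ := by ring
  have hpos : 0 ≤ (n : ℝ) ^ (t + 1) / s := by positivity
  have key : (n : ℝ) ^ (t + 1) * (1 - D / s) ≤ (t + 2).factorial * h := by
    have hexp : (n : ℝ) ^ (t + 1) * (1 - D / s) = (n : ℝ) ^ (t + 1) * (1 - (t + 1) / s)
        - ((t + 2 : ℕ) : ℝ) ^ 2 * ((n : ℝ) ^ (t + 1) / s) - 2 * c * ((n : ℝ) ^ (t + 1) / s)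
        - (n : ℝ) ^ (t + 1) / s := by
      rw [hD]; push_cast; ring
    rw [hexp]
    linarith
  have hlhs : (1 / ((t + 2 : ℕ) : ℝ) - D / ((t + 2 : ℕ) : ℝ) / s) * (n.choose (t + 1)) =
      (1 - D / s) * (n.choose (t + 1)) / ((t + 2 : ℕ) : ℝ) := by
    field_simp
  rw [hlhs]
  rcases le_total (1 - D / s) 0 with hneg | hnn
  · refine le_trans ?_ (Nat.cast_nonneg h)
    exact div_nonpos_of_nonpos_of_nonneg
      (mul_nonpos_of_nonpos_of_nonneg hneg (Nat.cast_nonneg _)) hr0.le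
  · have hch : (n.choose (t + 1) : ℝ) ≤ (n : ℝ) ^ (t + 1) / (t + 1).factorial :=
      Nat.choose_le_pow_div _ _
    have hf : (0 : ℝ) < (t + 1).factorial := by exact_mod_cast Nat.factorial_pos _
    rw [div_le_iff₀ hr0]
    calc (1 - D / s) * (n.choose (t + 1))
        ≤ (1 - D / s) * ((n : ℝ) ^ (t + 1) / (t + 1).factorial) := by gcongr
      _ = ((n : ℝ) ^ (t + 1) * (1 - D / s)) / (t + 1).factorial := by ring
      _ ≤ ((t + 2).factorial * h) / (t + 1).factorial := by gcongr
      _ = h * ((t + 2 : ℕ) : ℝ) := by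
          rw [Nat.factorial_succ (t + 1)]
          push_cast
          field_simp
          ring

/-- For every integer `r > 4` there exists a constant `C > 0` such that for every
sufficiently large positive integer `n` there exists an `r`-graph on at most `n`
vertices which is `F_r(r+1,2)`-free and `F_r(r+2,3)`-free and has at least
`(1/r − C/√n)·C(n,r−1)` edges. -/
theorem stmt_15 (r : ℕ) (hr : 4 < r) :
    ∃ C : ℝ, 0 < C ∧ ∃ N : ℕ, ∀ n : ℕ, N ≤ n →
      ∃ k ≤ n, ∃ H : Finset (Finset (Fin k)),
        (∀ A ∈ H, A.card = r) ∧
        FrFree H (r + 1) 2 ∧ FrFree H (r + 2) 3 ∧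
        ((1 / r : ℝ) - C / Real.sqrt n) * (n.choose (r - 1)) ≤ H.card := by
  refine ⟨(r + r ^ 2 + 2 * r.choose 4 : ℝ) / r, ?_, 1, fun n hn => ?_⟩
  · have : (0 : ℝ) < r := by exact_mod_cast (by omega : 0 < r)
    positivity
  -- `M = 2 ^ m` is the order of `B` and `a` that of `A`.
  set m := Nat.log 2 n.sqrt with hm
  set M := 2 ^ m with hM
  have hsq : n.sqrt ≠ 0 := (Nat.sqrt_pos.2 hn).ne'
  have hM1 : M ≤ n.sqrt := Nat.pow_log_le_self 2 hsq
  have hM2 : n.sqrt + 1 ≤ 2 * M := by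
    have := Nat.lt_pow_succ_log_self (b := 2) one_lt_two n.sqrt
    rw [Nat.succ_eq_add_one, Nat.pow_succ, ← hm, ← hM] at this
    omega
  have hM0 : 0 < M := by positivity
  have hMn : M ≤ n := hM1.trans (Nat.sqrt_le_self n)
  set a := n / M with ha
  have ha0 : 0 < a := Nat.div_pos hMn hM0
  have : NeZero a := ⟨ha0.ne'⟩
  have hcard : Fintype.card (ZMod a × (Fin m → ZMod 2)) = a * M := by
    rw [Fintype.card_prod, ZMod.card, Fintype.card_fun, ZMod.card, Fintype.card_fin]
  let e : Fin (a * M) ≃ ZMod a × (Fin m → ZMod 2) := (Fintype.equivFinOfCardEq hcard).symm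
  have hB : ∀ b : Fin m → ZMod 2, b + b = 0 := fun b => by
    funext i
    exact CharTwo.add_self_eq_zero (b i)
  have hNn : a * M ≤ n := Nat.div_mul_le_self n M
  refine ⟨a * M, hNn, zeroSumEdges e r, fun T hT => (mem_zeroSumEdges.1 hT).1,
    zeroSumEdges_free_two e r, zeroSumEdges_free_three hB e r, ?_⟩
  have hcount := count_edges e hr
  rw [Fintype.card_fin, ZMod.card] at hcount
  have hn0 : (0 : ℝ) ≤ n := Nat.cast_nonneg n
  have hss : Real.sqrt n ^ 2 = n := Real.sq_sqrt hn0
  have hs1 : 1 ≤ Real.sqrt n := Real.one_le_sqrt.2 (by exact_mod_cast hn)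
  have hMs : (M : ℝ) ≤ Real.sqrt n := (Nat.cast_le.2 hM1).trans Real.nat_sqrt_le_real_sqrt
  have hsM : Real.sqrt n ≤ 2 * M := by
    refine Real.real_sqrt_le_nat_sqrt_succ.trans ?_
    exact_mod_cast hM2
  have hNnR : (a : ℝ) * M ≤ n := by exact_mod_cast hNn
  refine edge_bound hr hs1 hss hNn ?_ ?_ hcount
  · have h1 : n < a * M + M := Nat.lt_div_mul_add hM0
    have h2 : (n : ℝ) ≤ (a : ℝ) * M + M := by exact_mod_cast h1.le
    push_cast
    linarith
  · by_contra! hlt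
    have ha' : (0 : ℝ) < a := by exact_mod_cast ha0
    nlinarith
end
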